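/- For every real x ≥ 0, the function t ↦ g(t,x) is represented on the interval (0,2) by its Taylor series centered at t₀ = 1: for every t ∈ (0,2), the series ∑_{n=0}^{∞} (g^{(n)}(1,x)/n!)·(t−1)^n converges and its sum equals g(t,x). -/

import Mathlib

/-- `g(t,x) = x · t^{-3/2} · exp(-x²/t)`. -/
noncomputable def g (t x : ℝ) : ℝ := x * t ^ (-(3 / 2) : ℝ) * Real.exp (-x ^ 2 / t)

noncomputable def gC (x : ℝ) (z : ℂ) : ℂ :=
  (x : ℂ) * z ^ (((-(3 / 2) : ℝ)) : ℂ) * Complex.exp (-(x : ℂ) ^ 2 / z)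

theorem gC_diff (x : ℝ) : DifferentiableOn ℂ (gC x) Complex.slitPlane := by
  intro z hz
  have h0 : z ≠ 0 := Complex.slitPlane_ne_zero hz
  apply DifferentiableAt.differentiableWithinAt
  unfold gC
  refine DifferentiableAt.mul (DifferentiableAt.mul (by fun_prop) ?_) ?_
  · exact DifferentiableAt.cpow differentiableAt_id (by fun_prop) hz
  · exact DifferentiableAt.cexp (DifferentiableAt.div (by fun_prop) differentiableAt_id h0)

theorem gC_iter (x : ℝ) (n : ℕ) :
    DifferentiableOn ℂ (iteratedDeriv n (gC x)) Complex.slitPlane := by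
  induction n with
  | zero => simpa using gC_diff x
  | succ n ih =>
    rw [iteratedDeriv_succ]
    exact ih.deriv Complex.isOpen_slitPlane

theorem gC_real (x s : ℝ) (hs : 0 < s) : gC x (s : ℂ) = ((g s x : ℝ) : ℂ) := by
  unfold gC g
  rw [← Complex.ofReal_cpow hs.le]
  push_cast
  rfl

theorem g_iter (x : ℝ) (n : ℕ) : ∀ s : ℝ, 0 < s →
    iteratedDeriv n (fun s => g s x) s = (iteratedDeriv n (gC x) (s : ℂ)).re := by
  induction n with
  | zero => intro s hs; simp [gC_real x s hs]
  | succ n ih =>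
    intro s hs
    rw [iteratedDeriv_succ, iteratedDeriv_succ]
    have hd : HasDerivAt (iteratedDeriv n (gC x)) (deriv (iteratedDeriv n (gC x)) (s : ℂ)) (s : ℂ) :=
      ((gC_iter x n).differentiableAt
        (Complex.isOpen_slitPlane.mem_nhds (Complex.ofReal_mem_slitPlane.2 hs))).hasDerivAt
    rw [← hd.real_of_complex.deriv]
    apply Filter.EventuallyEq.deriv_eq
    filter_upwards [lt_mem_nhds hs] with y hy using ih y hy

/-- For every `x ≥ 0` and every `t ∈ (0,2)`, the Taylor series of `t ↦ g(t,x)` centered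
at `t₀ = 1` converges and its sum equals `g(t,x)`. -/
theorem stmt_5 (x : ℝ) (hx : 0 ≤ x) (t : ℝ) (ht : t ∈ Set.Ioo (0 : ℝ) 2) :
    HasSum
      (fun n : ℕ => iteratedDeriv n (fun s => g s x) 1 / (n.factorial : ℝ) * (t - 1) ^ n)
      (g t x) := by
  have hsub : Metric.ball (1 : ℂ) 1 ⊆ Complex.slitPlane := Complex.ball_one_subset_slitPlane
  have hz : (t : ℂ) ∈ Metric.ball (1 : ℂ) 1 := by
    rw [Metric.mem_ball, Complex.dist_eq, ← Complex.ofReal_one, ← Complex.ofReal_sub,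
      Complex.norm_real, Real.norm_eq_abs, abs_lt]
    constructor <;> linarith [ht.1, ht.2]
  have h := Complex.hasSum_re (Complex.hasSum_taylorSeries_on_ball (r := 1)
    ((gC_diff x).mono (by simpa using hsub)) hz)
  rw [gC_real x t ht.1, Complex.ofReal_re] at h
  convert h using 2 with n
  rw [g_iter x n 1 one_pos]
  have : ((n.factorial : ℂ)⁻¹ • ((t : ℂ) - 1) ^ n • iteratedDeriv n (gC x) 1)
      = (((n.factorial : ℝ)⁻¹ * (t - 1) ^ n : ℝ) : ℂ) * iteratedDeriv n (gC x) 1 := by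
    push_cast; simp only [smul_eq_mul]; ring
  rw [this, Complex.re_ofReal_mul, Complex.ofReal_one]
  ring
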